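/- arXiv:1403.5509 — 2 statements merged into one kernel-verified Lean document; each statement's English description precedes it below -/
import Mathlib

section
/- Let V be a finite-dimensional complex vector space and d a natural number. The centralizer in End_ℂ(V^{⊗d}) of the unital subalgebra B generated by the diagonal operators Σ_{i=1}^d a^{(i)} (a ∈ End_ℂ(V)) equals the subalgebra A spanned by the permutation operators of S_d; that is, {T ∈ End_ℂ(V^{⊗d}) : T·S = S·T for all S ∈ B} = A. -/
open scoped TensorProduct

noncomputable section

/-- The permutation operator on `V^{⊗d}` induced by `σ ∈ S_d`:
`σ · (v₁ ⊗ ⋯ ⊗ v_d) = v_{σ⁻¹(1)} ⊗ ⋯ ⊗ v_{σ⁻¹(d)}`. -/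
def permOp (V : Type) [AddCommGroup V] [Module ℂ V] (d : ℕ) (σ : Equiv.Perm (Fin d)) :
    Module.End ℂ (⨂[ℂ] _ : Fin d, V) :=
  (PiTensorProduct.reindex ℂ (fun _ : Fin d => V) σ).toLinearMap

/-- The operator `a^{(i)}` acting by `a` in the `i`-th tensor factor and by the identity
elsewhere. -/
def slotOp (V : Type) [AddCommGroup V] [Module ℂ V] (d : ℕ) (i : Fin d)
    (a : Module.End ℂ V) : Module.End ℂ (⨂[ℂ] _ : Fin d, V) :=
  PiTensorProduct.map (Function.update (fun _ : Fin d => (LinearMap.id : V →ₗ[ℂ] V)) i a)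

/-- The diagonal operator `Σ_{i=1}^d a^{(i)}` on `V^{⊗d}`. -/
def diagOp (V : Type) [AddCommGroup V] [Module ℂ V] (d : ℕ) (a : Module.End ℂ V) :
    Module.End ℂ (⨂[ℂ] _ : Fin d, V) :=
  ∑ i : Fin d, slotOp V d i a

/-!
Write `A` for the span of the permutations of `V^{⊗d}` and `B` for the algebra generated by the
diagonal operators. By Maschke's theorem `V^{⊗d}` is a semisimple `A`-module, so Jacobson density
places every operator of the bicommutant of `A` in the closure of `A` in the finite topology; as
`A` is finite-dimensional, it is closed, and so it is its own bicommutant. It remains to see that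
an operator commuting with `B` commutes with the centralizer of `A`, for which it is enough that
the centralizer of `A` lies in the closure of `B`. Tensor products of endomorphisms span a dense
subspace of `End (V^{⊗d})`; averaging over `S_d` shows that the symmetrized tensor products of
endomorphisms span a dense subspace of the centralizer of `A`, and these lie in `B`: multiplying
a symmetrized product `f` with `f i = 1` by the diagonal operator of `a` gives a nonzero multiple
of the one having `a` in slot `i`, up to terms with no more nontrivial factors than `f`.
-/

section FiniteTopology

/-- `X` lies in the closure of `A` in the finite topology on linear maps, that is, the topology of
pointwise convergence for the discrete topology on the target: on every finite set of vectors, `X`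
agrees with some member of `A`. -/
def MemFiniteClosure {R E F : Type*} [Semiring R] [AddCommMonoid E] [AddCommMonoid F]
    [Module R E] [Module R F] (A : Set (E →ₗ[R] F)) (X : E →ₗ[R] F) : Prop :=
  ∀ s : Finset E, ∃ Y ∈ A, Set.EqOn Y X s

theorem MemFiniteClosure.mono {R E F : Type*} [Semiring R] [AddCommMonoid E] [AddCommMonoid F]
    [Module R E] [Module R F] {A B : Set (E →ₗ[R] F)} {X : E →ₗ[R] F}
    (hX : MemFiniteClosure A X) (hAB : A ⊆ B) : MemFiniteClosure B X := fun s =>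
  let ⟨Y, hY, hYX⟩ := hX s
  ⟨Y, hAB hY, hYX⟩

theorem MemFiniteClosure.commute_of_mem_centralizer {R E : Type*} [Semiring R] [AddCommMonoid E]
    [Module R E] {A : Set (Module.End R E)} {X T : Module.End R E} (hX : MemFiniteClosure A X)
    (hT : T ∈ A.centralizer) : Commute X T := by
  classical
  ext v
  obtain ⟨Y, hY, hYX⟩ := hX {v, T v}
  calc X (T v) = Y (T v) := (hYX (by simp)).symm
    _ = T (Y v) := LinearMap.congr_fun (hT Y hY) v
    _ = T (X v) := by rw [hYX (by simp)]

theorem MemFiniteClosure.mem_of_isArtinian {R E F : Type*} [CommRing R] [AddCommGroup E]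
    [AddCommGroup F] [Module R E] [Module R F] {A : Submodule R (E →ₗ[R] F)} [IsArtinian R A]
    {X : E →ₗ[R] F} (hX : MemFiniteClosure A X) : X ∈ A := by
  classical
  let vanishing (s : Finset E) : Submodule R A :=
    ⨅ v ∈ s, LinearMap.ker (LinearMap.applyₗ v ∘ₗ A.subtype)
  have mem_vanishing {s : Finset E} {Z : A} :
      Z ∈ vanishing s ↔ ∀ v ∈ s, (Z : E →ₗ[R] F) v = 0 := by
    simp [vanishing]
  obtain ⟨_, ⟨s, rfl⟩, hs⟩ :=
    wellFounded_lt.has_min (Set.range vanishing) (Set.range_nonempty vanishing)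
  obtain ⟨Y, hY, hYX⟩ := hX s
  suffices Y = X from this ▸ hY
  ext v
  obtain ⟨Z, hZ, hZX⟩ := hX (insert v s)
  have hle : vanishing (insert v s) ≤ vanishing s := fun W hW =>
    mem_vanishing.2 fun u hu => mem_vanishing.1 hW u (Finset.mem_insert_of_mem hu)
  have heq : vanishing (insert v s) = vanishing s := eq_of_le_of_not_lt hle (hs _ ⟨_, rfl⟩)
  have hZY : (⟨Z, hZ⟩ - ⟨Y, hY⟩ : A) ∈ vanishing s := mem_vanishing.2 fun u hu => by
    simp [hZX (Finset.mem_insert_of_mem hu), hYX hu]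
  have hv : Z v - Y v = 0 := mem_vanishing.1 (heq ▸ hZY) v (Finset.mem_insert_self v s)
  rw [← sub_eq_zero.1 hv, hZX (Finset.mem_insert_self v s)]

theorem memFiniteClosure_span_coord_smulRight {R κ E F : Type*} [CommSemiring R]
    [AddCommMonoid E] [AddCommMonoid F] [Module R E] [Module R F] (b : Module.Basis κ R E)
    (X : E →ₗ[R] F) :
    MemFiniteClosure
      (Submodule.span R (Set.range fun p : κ × F => (b.coord p.1).smulRight p.2)) X := by
  classical
  intro s
  let J := s.biUnion fun v => (b.repr v).support
  refine ⟨∑ j ∈ J, (b.coord j).smulRight (X (b j)),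
    Submodule.sum_mem _ fun j _ => Submodule.subset_span ⟨(j, X (b j)), rfl⟩, fun v hv => ?_⟩
  have hsupp : (b.repr v).support ⊆ J :=
    Finset.subset_biUnion_of_mem (fun v => (b.repr v).support) hv
  calc (∑ j ∈ J, (b.coord j).smulRight (X (b j))) v
    _ = ∑ j ∈ J, b.repr v j • X (b j) := by simp
    _ = X (∑ j ∈ J, b.repr v j • b j) := by simp
    _ = X v := by
      rw [← Finsupp.linearCombination_apply_of_mem_supported R
        ((Finsupp.mem_supported R _).2 (Finset.coe_subset.2 hsupp)), b.linearCombination_repr]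

theorem MemFiniteClosure.averageMap {k G E F : Type*} [CommRing k] [Group G] [Fintype G]
    [Invertible (Fintype.card G : k)] [AddCommGroup E] [AddCommGroup F] [Module k E] [Module k F]
    (ρ : Representation k G E) (τ : Representation k G F) {A : Set (E →ₗ[k] F)} {X : E →ₗ[k] F}
    (hX : MemFiniteClosure A X) :
    MemFiniteClosure ((ρ.linHom τ).averageMap '' A) ((ρ.linHom τ).averageMap X) := by
  classical
  intro s
  obtain ⟨Y, hY, hYX⟩ := hX (Finset.univ.biUnion fun g => s.image (ρ g))
  refine ⟨_, ⟨Y, hY, rfl⟩, fun v hv => ?_⟩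
  have hYX_apply (g : G) : Y (ρ g v) = X (ρ g v) :=
    hYX (by simpa using ⟨g, v, hv, rfl⟩)
  simp [GroupAlgebra.average, LinearMap.sum_apply, hYX_apply]

end FiniteTopology

section DoubleCentralizer

theorem memFiniteClosure_of_mem_centralizer_centralizer {k E : Type*} [CommRing k]
    [AddCommGroup E] [Module k E] {A : Subalgebra k (Module.End k E)} [IsSemisimpleModule A E]
    {T : Module.End k E} (hT : T ∈ (A : Set (Module.End k E)).centralizer.centralizer) :
    MemFiniteClosure A T := by
  have hcomm (φ : Module.End A E) (v : E) : T (φ v) = φ (T v) := by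
    let φ' : Module.End k E := φ.restrictScalars k
    have hφ' : φ' ∈ (A : Set (Module.End k E)).centralizer := fun a ha =>
      LinearMap.ext fun u => (φ.map_smul ⟨a, ha⟩ u).symm
    exact (LinearMap.congr_fun (hT φ' hφ') v).symm
  let T' : Module.End (Module.End A E) E := { T with map_smul' := hcomm }
  intro s
  obtain ⟨a, ha⟩ := jacobson_density T' s
  exact ⟨a, a.2, fun v hv => (ha v hv).symm⟩

theorem centralizer_centralizer_eq_of_isSemisimpleModule {k E : Type*} [CommRing k]
    [AddCommGroup E] [Module k E] (A : Subalgebra k (Module.End k E)) [IsSemisimpleModule A E]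
    [IsArtinian k A] :
    (A : Set (Module.End k E)).centralizer.centralizer = A :=
  Set.Subset.antisymm
    (fun _ hT => MemFiniteClosure.mem_of_isArtinian (A := Subalgebra.toSubmodule A)
      (memFiniteClosure_of_mem_centralizer_centralizer hT))
    Set.subset_centralizer_centralizer

theorem toSubmodule_range_asAlgebraHom {k G E : Type*} [CommSemiring k] [Monoid G]
    [AddCommMonoid E] [Module k E] (ρ : Representation k G E) :
    Subalgebra.toSubmodule ρ.asAlgebraHom.range = Submodule.span k (Set.range ρ) := by
  refine le_antisymm ?_ (Submodule.span_le.2 ?_)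
  · rintro _ ⟨a, rfl⟩
    change ρ.asAlgebraHom a ∈ _
    rw [ρ.asAlgebraHom_def, MonoidAlgebra.lift_apply]
    exact Submodule.sum_mem _ fun g _ => Submodule.smul_mem _ _ (Submodule.subset_span ⟨g, rfl⟩)
  · rintro _ ⟨g, rfl⟩
    exact ⟨MonoidAlgebra.single g 1, ρ.asAlgebraHom_single_one g⟩

theorem centralizer_centralizer_range_eq_span {k G E : Type*} [Field k] [Group G] [Finite G]
    [NeZero (Nat.card G : k)] [AddCommGroup E] [Module k E] (ρ : Representation k G E) :
    (Set.range ρ).centralizer.centralizer =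
      (Submodule.span k (Set.range ρ) : Set (Module.End k E)) := by
  let A := ρ.asAlgebraHom.range
  have hA : Subalgebra.toSubmodule A = Submodule.span k (Set.range ρ) :=
    toSubmodule_range_asAlgebraHom ρ
  have : IsSemisimpleRing A :=
    ρ.asAlgebraHom.rangeRestrict.toRingHom.isSemisimpleRing_of_surjective
      ρ.asAlgebraHom.rangeRestrict_surjective
  have : IsArtinian k A := isArtinian_of_surjective _ ρ.asAlgebraHom.rangeRestrict.toLinearMap
    ρ.asAlgebraHom.rangeRestrict_surjective
  refine Set.Subset.antisymm ?_ ?_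
  · calc (Set.range ρ).centralizer.centralizer
      _ ⊆ (A : Set (Module.End k E)).centralizer.centralizer := by
        refine Set.centralizer_subset (Set.centralizer_subset ?_)
        exact (Submodule.subset_span : _ ⊆ (Submodule.span k (Set.range ρ) : Set _)).trans hA.ge
      _ = A := centralizer_centralizer_eq_of_isSemisimpleModule A
      _ ⊆ Submodule.span k (Set.range ρ) := hA.le
  · let C := Subalgebra.centralizer k (Set.range ρ).centralizer
    have hle : Submodule.span k (Set.range ρ) ≤ Subalgebra.toSubmodule C :=
      Submodule.span_le.2 Set.subset_centralizer_centralizer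
    exact hle

end DoubleCentralizer

section TensorPower

open PiTensorProduct

theorem map_coord_smulRight {R ι : Type*} [CommRing R] [Finite ι] {κ M N : ι → Type*}
    [∀ i, AddCommGroup (M i)] [∀ i, Module R (M i)] [∀ i, AddCommGroup (N i)]
    [∀ i, Module R (N i)] (b : ∀ i, Module.Basis (κ i) R (M i)) (J : ∀ i, κ i) (w : ∀ i, N i) :
    PiTensorProduct.map (fun i => ((b i).coord (J i)).smulRight (w i)) =
      ((Basis.piTensorProduct b).coord J).smulRight (tprod R w) := by
  classical
  have := Fintype.ofFinite ι
  ext v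
  simp [Basis.piTensorProduct_repr_tprod_apply, MultilinearMap.map_smul_univ]

theorem memFiniteClosure_span_range_map {R ι : Type*} [CommRing R] [Finite ι] {M N : ι → Type*}
    [∀ i, AddCommGroup (M i)] [∀ i, Module R (M i)] [∀ i, Module.Free R (M i)]
    [∀ i, AddCommGroup (N i)] [∀ i, Module R (N i)] (X : (⨂[R] i, M i) →ₗ[R] ⨂[R] i, N i) :
    MemFiniteClosure
      (Submodule.span R (Set.range (PiTensorProduct.map : (∀ i, M i →ₗ[R] N i) → _)) : Set _)
      X := by
  let b (i : ι) := Module.Free.chooseBasis R (M i)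
  refine (memFiniteClosure_span_coord_smulRight (Basis.piTensorProduct b) X).mono
    (Submodule.span_le.2 ?_)
  rintro _ ⟨⟨J, w⟩, rfl⟩
  let rankOne : (⨂[R] i, N i) →ₗ[R] (⨂[R] i, M i) →ₗ[R] ⨂[R] i, N i :=
    LinearMap.smulRightₗ ((Basis.piTensorProduct b).coord J)
  suffices ⊤ ≤ (Submodule.span R
      (Set.range (PiTensorProduct.map : (∀ i, M i →ₗ[R] N i) → _))).comap rankOne from
    this (Submodule.mem_top (x := w))
  rw [← span_tprod_eq_top, Submodule.span_le]
  rintro _ ⟨w, rfl⟩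
  exact Submodule.subset_span ⟨_, map_coord_smulRight b J w⟩

section Operators

variable (R ι V : Type*) [CommSemiring R] [AddCommMonoid V] [Module R V]

/-- The representation of the symmetric group of `ι` on `V^{⊗ι}` permuting the tensor factors. -/
def permRep : Representation R (Equiv.Perm ι) (⨂[R] _ : ι, V) where
  toFun σ := (reindex R (fun _ : ι => V) σ).toLinearMap
  map_one' := by
    ext v
    exact reindex_tprod 1 v
  map_mul' σ τ := by
    ext v
    simp only [LinearMap.compMultilinearMap_apply, LinearEquiv.coe_coe, Module.End.mul_apply,
      reindex_tprod]
    rfl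

variable {R ι V}

theorem permRep_mul_map (σ : Equiv.Perm ι) (f : ι → Module.End R V) :
    permRep R ι V σ * PiTensorProduct.map f =
      PiTensorProduct.map (f ∘ σ.symm) * permRep R ι V σ :=
  (map_comp_reindex_eq (t := fun _ : ι => V) f σ).symm

theorem linHom_permRep_map (σ : Equiv.Perm ι) (f : ι → Module.End R V) :
    (permRep R ι V).linHom (permRep R ι V) σ (PiTensorProduct.map f) =
      PiTensorProduct.map (f ∘ σ.symm) := by
  calc permRep R ι V σ * (PiTensorProduct.map f * permRep R ι V σ⁻¹)
    _ = PiTensorProduct.map (f ∘ σ.symm) * (permRep R ι V σ * permRep R ι V σ⁻¹) := by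
      rw [← mul_assoc, permRep_mul_map, mul_assoc]
    _ = PiTensorProduct.map (f ∘ σ.symm) := by
      rw [← map_mul, mul_inv_cancel, map_one, mul_one]

variable [Fintype ι] [DecidableEq ι]

/-- The action of `a ∈ gl(V)` on `V^{⊗ι}`: the sum over the slots `i` of the operator acting by `a`
in slot `i` and by the identity elsewhere. -/
def diagonalOp (a : Module.End R V) : Module.End R (⨂[R] _ : ι, V) :=
  ∑ i, PiTensorProduct.map (Pi.mulSingle i a)

theorem permRep_commute_diagonalOp (σ : Equiv.Perm ι) (a : Module.End R V) :
    Commute (permRep R ι V σ) (diagonalOp a) := by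
  have hslot (i : ι) : (Pi.mulSingle i a : ι → Module.End R V) ∘ σ.symm = Pi.mulSingle (σ i) a := by
    ext j : 1
    simp only [Function.comp_apply, Pi.mulSingle_apply, Equiv.symm_apply_eq]
  simp only [Commute, SemiconjBy, diagonalOp, Finset.mul_sum, Finset.sum_mul, permRep_mul_map,
    hslot]
  exact Fintype.sum_equiv σ _ _ fun _ => rfl

variable (R ι V) in
/-- The image of `U(gl(V))` in `End(V^{⊗ι})`, generated by the diagonal operators. -/
def diagonalSubalgebra : Subalgebra R (Module.End R (⨂[R] _ : ι, V)) :=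
  Algebra.adjoin R (Set.range diagonalOp)

/-- The symmetrized tensor product `∑ σ, f_{σ 1} ⊗ ⋯ ⊗ f_{σ d}` of a family of endomorphisms, not
normalized by the order of the symmetric group. -/
def symmMap (f : ι → Module.End R V) : Module.End R (⨂[R] _ : ι, V) :=
  ∑ σ : Equiv.Perm ι, PiTensorProduct.map (f ∘ σ)

theorem symmMap_comp_perm (f : ι → Module.End R V) (τ : Equiv.Perm ι) :
    symmMap (f ∘ τ) = symmMap f :=
  Fintype.sum_equiv (Equiv.mulLeft τ) _ (fun σ => PiTensorProduct.map (f ∘ σ)) fun σ =>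
    congrArg PiTensorProduct.map (rfl : (f ∘ τ) ∘ σ = f ∘ Equiv.mulLeft τ σ)

theorem symmMap_update_eq_symmMap_update {f : ι → Module.End R V} {i j : ι} (hij : f i = f j)
    (a : Module.End R V) :
    symmMap (Function.update f i a) = symmMap (Function.update f j a) := by
  have hswap : Function.update f i a ∘ Equiv.swap i j = Function.update f j a := by
    ext l : 1
    grind [Function.update_apply]
  rw [← hswap, symmMap_comp_perm]

theorem diagonalOp_mul_symmMap (a : Module.End R V) (f : ι → Module.End R V) :
    diagonalOp a * symmMap f = ∑ i, symmMap (Function.update f i (a * f i)) := by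
  have hterm (σ : Equiv.Perm ι) (i : ι) :
      PiTensorProduct.map (Pi.mulSingle i a) * PiTensorProduct.map (f ∘ σ) =
        PiTensorProduct.map (Function.update f (σ i) (a * f (σ i)) ∘ σ) := by
    rw [← PiTensorProduct.map_mul]
    congr 1
    ext j : 1
    rcases eq_or_ne j i with rfl | hji <;> simp [*]
  simp only [symmMap, diagonalOp, Finset.mul_sum, Finset.sum_mul, hterm]
  rw [Finset.sum_comm (t := Finset.univ (α := Equiv.Perm ι))]
  exact Finset.sum_congr rfl fun σ _ => Equiv.sum_comp σ fun i =>
    PiTensorProduct.map (Function.update f i (a * f i) ∘ σ)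

theorem diagonalOp_mul_symmMap_of_eq_one (a : Module.End R V) {f : ι → Module.End R V}
    {S : Finset ι} (hf : ∀ j ∉ S, f j = 1) {i : ι} (hi : i ∉ S) :
    diagonalOp a * symmMap f =
      ∑ j ∈ S, symmMap (Function.update f j (a * f j)) +
        Sᶜ.card • symmMap (Function.update f i a) := by
  rw [diagonalOp_mul_symmMap, ← Finset.sum_add_sum_compl S]
  congr 1
  refine Finset.sum_eq_card_nsmul fun j hj => ?_
  have hj' := hf j (Finset.mem_compl.1 hj)
  rw [hj', mul_one, symmMap_update_eq_symmMap_update (hj'.trans (hf i hi).symm)]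

end Operators

section Symmetrization

variable {R ι V : Type*} [CommRing R] [Fintype ι] [DecidableEq ι] [AddCommGroup V] [Module R V]

theorem averageMap_linHom_permRep_map [Invertible (Fintype.card (Equiv.Perm ι) : R)]
    (f : ι → Module.End R V) :
    ((permRep R ι V).linHom (permRep R ι V)).averageMap (PiTensorProduct.map f) =
      ⅟(Fintype.card (Equiv.Perm ι) : R) • symmMap f := by
  have hsum : ∑ σ : Equiv.Perm ι, PiTensorProduct.map (f ∘ σ.symm) = symmMap f :=
    Fintype.sum_equiv (Equiv.inv _) _ _ fun _ => rfl
  simp only [Representation.averageMap, GroupAlgebra.average, map_smul, map_sum,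
    LinearMap.smul_apply, LinearMap.sum_apply, Representation.asAlgebraHom_of, linHom_permRep_map,
    hsum]

theorem symmMap_mem_diagonalSubalgebra (hd : IsUnit ((Fintype.card ι).factorial : R))
    (f : ι → Module.End R V) : symmMap f ∈ diagonalSubalgebra R ι V := by
  let B := diagonalSubalgebra R ι V
  suffices ∀ (S : Finset ι) (f : ι → Module.End R V), (∀ j ∉ S, f j = 1) → symmMap f ∈ B from
    this Finset.univ f (by simp)
  intro S
  induction S using Finset.induction_on with
  | empty =>
    intro f hf
    obtain rfl : f = 1 := funext fun j => hf j (Finset.notMem_empty j)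
    have hmap_one (σ : Equiv.Perm ι) : PiTensorProduct.map ((1 : ι → Module.End R V) ∘ σ) = 1 :=
      PiTensorProduct.map_one
    exact B.sum_mem fun σ _ => hmap_one σ ▸ B.one_mem
  | insert i S hi ih =>
    intro f hf
    let g := Function.update f i 1
    have hg : ∀ j ∉ S, g j = 1 := fun j hj => by
      by_cases hji : j = i <;> simp_all [g]
    have hfg : Function.update g i (f i) = f := by simp [g]
    have hprod : diagonalOp (f i) * symmMap g ∈ B :=
      B.mul_mem (Algebra.subset_adjoin ⟨_, rfl⟩) (ih g hg)
    have hrest : ∑ j ∈ S, symmMap (Function.update g j (f i * g j)) ∈ B :=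
      B.sum_mem fun j hj => ih _ fun l hl => by
        rw [Function.update_of_ne (ne_of_mem_of_not_mem hj hl).symm, hg l hl]
    have hcard : IsUnit (Sᶜ.card : R) := isUnit_of_dvd_unit (Nat.cast_dvd_cast <|
      Nat.dvd_factorial (Finset.card_pos.2 ⟨i, Finset.mem_compl.2 hi⟩) Sᶜ.card_le_univ) hd
    rw [diagonalOp_mul_symmMap_of_eq_one (f i) hg hi, hfg, ← Nat.cast_smul_eq_nsmul R] at hprod
    exact (B.toSubmodule.smul_mem_iff_of_isUnit hcard).1
      ((B.toSubmodule.add_mem_iff_right hrest).1 hprod)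

theorem memFiniteClosure_diagonalSubalgebra [Module.Free R V]
    (hd : IsUnit ((Fintype.card ι).factorial : R)) {X : Module.End R (⨂[R] _ : ι, V)}
    (hX : X ∈ (Set.range (permRep R ι V)).centralizer) :
    MemFiniteClosure (diagonalSubalgebra R ι V : Set _) X := by
  let ρ := permRep R ι V
  let B := Subalgebra.toSubmodule (diagonalSubalgebra R ι V)
  let : Invertible (Fintype.card (Equiv.Perm ι) : R) := by
    rw [Fintype.card_perm]
    exact hd.invertible
  have hX_inv : (ρ.linHom ρ).averageMap X = X := by
    refine (ρ.linHom ρ).averageMap_id X fun σ => ?_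
    calc ρ σ * (X * ρ σ⁻¹)
      _ = X * (ρ σ * ρ σ⁻¹) := by rw [← mul_assoc, hX (ρ σ) ⟨σ, rfl⟩, mul_assoc]
      _ = X := by rw [← map_mul, mul_inv_cancel, map_one, mul_one]
  have hspan : Submodule.span R (Set.range PiTensorProduct.map) ≤
      B.comap (ρ.linHom ρ).averageMap := by
    rw [Submodule.span_le]
    rintro _ ⟨f, rfl⟩
    rw [SetLike.mem_coe, Submodule.mem_comap, averageMap_linHom_permRep_map]
    exact B.smul_mem _ (symmMap_mem_diagonalSubalgebra hd f)
  rw [← hX_inv]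
  exact (MemFiniteClosure.averageMap ρ ρ (memFiniteClosure_span_range_map X)).mono
    (Set.image_subset_iff.2 hspan)

end Symmetrization

theorem schur_weyl_centralizer_of_gl_general {k ι V : Type*} [Field k] [Fintype ι]
    [DecidableEq ι] [AddCommGroup V] [Module k V] (hd : ((Fintype.card ι).factorial : k) ≠ 0) :
    (diagonalSubalgebra k ι V : Set (Module.End k (⨂[k] _ : ι, V))).centralizer =
      (Submodule.span k (Set.range (permRep k ι V)) : Set (Module.End k (⨂[k] _ : ι, V))) := by
  let B := diagonalSubalgebra k ι V
  have : NeZero (Nat.card (Equiv.Perm ι) : k) := ⟨by rwa [Nat.card_perm, Nat.card_eq_fintype_card]⟩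
  rw [← centralizer_centralizer_range_eq_span]
  refine Set.Subset.antisymm (fun T hT X hX => ?_) (Set.centralizer_subset ?_)
  · exact (memFiniteClosure_diagonalSubalgebra hd.isUnit hX).commute_of_mem_centralizer hT
  · have hle : B ≤ Subalgebra.centralizer k (Set.range (permRep k ι V)) := by
      refine Algebra.adjoin_le ?_
      rintro _ ⟨a, rfl⟩ _ ⟨σ, rfl⟩
      exact permRep_commute_diagonalOp σ a
    exact hle

end TensorPower

/-- Schur-Weyl duality, second half: the centralizer of the unital subalgebra `B` generated by
the diagonal operators `Σ_i a^{(i)}` (`a ∈ End(V)`) on `V^{⊗d}` is the subalgebra `A` spanned by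
the permutation operators of `S_d`. -/
theorem schur_weyl_centralizer_of_gl
    (V : Type) [AddCommGroup V] [Module ℂ V] [FiniteDimensional ℂ V] (d : ℕ) :
    {T : Module.End ℂ (⨂[ℂ] _ : Fin d, V) |
        ∀ S ∈ (Algebra.adjoin ℂ {S | ∃ a : Module.End ℂ V, S = diagOp V d a} : Set _),
          T * S = S * T}
      = (Submodule.span ℂ {S | ∃ σ : Equiv.Perm (Fin d), S = permOp V d σ} : Set _) := by
  have hA : Set.range (permRep ℂ (Fin d) V) = {S | ∃ σ : Equiv.Perm (Fin d), S = permOp V d σ} :=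
    Set.ext fun _ => exists_congr fun _ => eq_comm
  have hB : Set.range diagonalOp = {S | ∃ a : Module.End ℂ V, S = diagOp V d a} :=
    Set.ext fun _ => exists_congr fun _ => eq_comm
  rw [← hA, ← hB]
  ext T
  rw [← schur_weyl_centralizer_of_gl_general (Nat.cast_ne_zero.2 (Nat.factorial_ne_zero _))]
  exact forall₂_congr fun _ _ => eq_comm
end
end

section
/- Let n ∈ ℕ and let λ be a partition with |λ| + λ_1 ≤ n. For j ≥ 1 define λ^{(j)} by λ^{(j)}_1 = n − |λ| + 1, λ^{(j)}_i = λ_{i−1} + 1 for 2 ≤ i ≤ j, and λ^{(j)}_i = λ_i for i > j; set λ^{(0)} = λ. Then each λ^{(j)} is a partition, λ^{(0)} ⊊ λ^{(1)} ⊊ λ^{(2)} ⊊ ⋯ (each λ^{(j)} is strictly contained in λ^{(j+1)}, meaning λ^{(j)}_i ≤ λ^{(j+1)}_i for all i with strict inequality for some i), and λ^{(j)} ∼n λ for every j ≥ 0. -/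
/-- A partition (Young diagram): a weakly decreasing function `λ : {1,2,…} → ℕ` with
`λ_i = 0` for all sufficiently large `i`. -/
structure NPartition where
  /-- the entries `λ_1 ≥ λ_2 ≥ ⋯` of the partition -/
  toFun : ℕ+ → ℕ
  antitone' : ∀ ⦃i j : ℕ+⦄, i ≤ j → toFun j ≤ toFun i
  eventually_zero' : ∃ N : ℕ+, ∀ i : ℕ+, N ≤ i → toFun i = 0

/-- `|λ| = Σ_{i ≥ 1} λ_i`. -/
noncomputable def NPartition.size (l : NPartition) : ℕ := ∑ᶠ i : ℕ+, l.toFun i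

/-- The sequence `μ_λ(ν)` with `μ_λ(ν)_0 = ν − |λ|` and `μ_λ(ν)_i = λ_i − i` for `i ≥ 1`. -/
noncomputable def muSeq (ν : ℂ) (l : NPartition) : ℕ → ℂ := fun i =>
  if h : i = 0 then ν - (l.size : ℂ)
  else (l.toFun ⟨i, Nat.pos_of_ne_zero h⟩ : ℂ) - (i : ℂ)

/-- `λ ∼ν λ'`: there is a bijection `f : ℕ → ℕ` with `μ_λ(ν)_i = μ_{λ'}(ν)_{f(i)}` for all
`i ∈ ℕ`. -/
def nuEquiv (ν : ℂ) (l l' : NPartition) : Prop :=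
  ∃ f : ℕ ≃ ℕ, ∀ i : ℕ, muSeq ν l i = muSeq ν l' (f i)

/-- The underlying function of the partition `λ^{(j)}`: for `j ≥ 1`,
`λ^{(j)}_1 = n − |λ| + 1`, `λ^{(j)}_i = λ_{i−1} + 1` for `2 ≤ i ≤ j`, and `λ^{(j)}_i = λ_i` for
`i > j`; and `λ^{(0)} = λ`. -/
noncomputable def chainFun (n : ℕ) (l : NPartition) (j : ℕ) : ℕ+ → ℕ := fun i =>
  if j = 0 then l.toFun i
  else if i = 1 then n - l.size + 1
  else if (i : ℕ) ≤ j then l.toFun (i - 1) + 1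
  else l.toFun i

/-!
`λ^{(j+1)}` is obtained from `λ^{(j)}` by replacing the single row `j + 1`, and the size identity
`|λ^{(j)}| + λ^{(j+1)}_{j+1} = n + (j + 1)` says that the new row has `μ`-entry
`n - |λ^{(j)}| = μ_0`. Replacing one row `a` in this way changes the size, hence `μ_0`, by exactly
the amount which makes the new `μ_0` equal to the old `μ_a`; so the step from `λ^{(j)}` to
`λ^{(j+1)}` merely exchanges the entries `0` and `j + 1` of the `μ`-sequence.
-/

theorem finsum_add_single {α M : Type*} [DecidableEq α] [AddCommMonoid M] {f : α → M}
    (hf : f.support.Finite) (a : α) (m : M) :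
    ∑ᶠ i, (f i + (Pi.single a m : α → M) i) = ∑ᶠ i, f i + m := by
  have finsum_single : ∑ᶠ i, (Pi.single a m : α → M) i = m := by
    rw [finsum_eq_single _ a fun i hi => by simp [hi], Pi.single_eq_same]
  rw [finsum_add_distrib hf ((Set.finite_singleton a).subset Pi.support_single_subset),
    finsum_single]

theorem finsum_update_add {α M : Type*} [DecidableEq α] [AddCommMonoid M] {f : α → M}
    (hf : f.support.Finite) (a : α) (m : M) :
    ∑ᶠ i, Function.update f a m i + f a = ∑ᶠ i, f i + m := by
  have support_update : (Function.update f a m).support.Finite :=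
    (hf.insert a).subset fun i hi => by
      rcases eq_or_ne i a with rfl | hia
      · exact Set.mem_insert i _
      · exact Set.mem_insert_of_mem a (by simpa [hia] using hi)
  rw [← finsum_add_single support_update a, ← finsum_add_single hf a]
  refine finsum_congr fun i => ?_
  rcases eq_or_ne i a with rfl | hia
  · simp [add_comm]
  · simp [hia]

namespace NPartition

theorem toFun_injective : Function.Injective NPartition.toFun := by
  rintro ⟨f, _, _⟩ ⟨_, _, _⟩ rfl
  rfl

theorem finite_support (l : NPartition) : l.toFun.support.Finite := by
  obtain ⟨N, hN⟩ := l.eventually_zero'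
  exact (Set.finite_Iio N).subset fun i hi => lt_of_not_ge fun hNi => hi (hN i hNi)

theorem size_add_of_toFun_eq_update {l l' : NPartition} {a : ℕ+} {m : ℕ}
    (hl' : l'.toFun = Function.update l.toFun a m) : l'.size + l.toFun a = l.size + m := by
  rw [size, size, hl', finsum_update_add l.finite_support]

end NPartition

theorem muSeq_zero (ν : ℂ) (l : NPartition) : muSeq ν l 0 = ν - l.size :=
  dif_pos rfl

theorem muSeq_coe (ν : ℂ) (l : NPartition) (i : ℕ+) : muSeq ν l i = l.toFun i - (i : ℕ) :=
  dif_neg i.ne_zero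

theorem nuEquiv.refl (ν : ℂ) (l : NPartition) : nuEquiv ν l l :=
  ⟨Equiv.refl ℕ, fun _ => rfl⟩

theorem nuEquiv.trans {ν : ℂ} {l₁ l₂ l₃ : NPartition} :
    nuEquiv ν l₁ l₂ → nuEquiv ν l₂ l₃ → nuEquiv ν l₁ l₃ :=
  fun ⟨f, hf⟩ ⟨g, hg⟩ => ⟨f.trans g, fun i => (hf i).trans (hg (f i))⟩

theorem nuEquiv_of_toFun_eq_update {ν : ℂ} {l l' : NPartition} {a : ℕ+} {m : ℕ}
    (hl' : l'.toFun = Function.update l.toFun a m) (hm : (m : ℂ) - (a : ℕ) = muSeq ν l 0) :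
    nuEquiv ν l' l := by
  have row_a : muSeq ν l' a = muSeq ν l 0 := by
    rw [muSeq_coe, hl', Function.update_self, hm]
  have row_zero : muSeq ν l' 0 = muSeq ν l a := by
    have hsize : (l'.size : ℂ) + l.toFun a = l.size + m := by
      exact_mod_cast NPartition.size_add_of_toFun_eq_update hl'
    rw [muSeq_zero] at hm ⊢
    rw [muSeq_coe]
    linear_combination -hm - hsize
  refine ⟨Equiv.swap 0 (a : ℕ), fun i => ?_⟩
  rcases eq_or_ne i 0 with rfl | hi₀
  · rw [Equiv.swap_apply_left, row_zero]
  rcases eq_or_ne i a with rfl | hia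
  · rw [Equiv.swap_apply_right, row_a]
  rw [Equiv.swap_apply_of_ne_of_ne hi₀ hia]
  lift i to ℕ+ using Nat.pos_of_ne_zero hi₀
  rw [muSeq_coe, muSeq_coe, hl', Function.update_of_ne (mt (congrArg _) hia)]

/-- The sequence `(n − |λ| + 1, λ_1 + 1, λ_2 + 1, …)`, which is the row-wise limit of the
partitions `λ^{(j)}` as `j → ∞`. It is not itself a partition, as it never vanishes. -/
noncomputable def chainLimit (n : ℕ) (l : NPartition) (i : ℕ+) : ℕ :=
  if i = 1 then n - l.size + 1 else l.toFun (i - 1) + 1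

section chain

variable (n : ℕ) (l : NPartition)

theorem chainLimit_one : chainLimit n l 1 = n - l.size + 1 :=
  if_pos rfl

theorem chainLimit_add_one (i : ℕ+) : chainLimit n l (i + 1) = l.toFun i + 1 := by
  rw [chainLimit, if_neg (PNat.lt_add_left 1 i).ne', PNat.add_sub]

theorem chainFun_apply (j : ℕ) (i : ℕ+) :
    chainFun n l j i = if (i : ℕ) ≤ j then chainLimit n l i else l.toFun i := by
  have := i.pos
  grind [chainFun, chainLimit, PNat.one_coe]

theorem chainFun_zero : chainFun n l 0 = l.toFun :=
  funext fun _ => if_pos rfl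

theorem chainFun_succPNat (j : ℕ) : chainFun n l j j.succPNat = l.toFun j.succPNat := by
  simp [chainFun_apply]

theorem chainFun_succ (j : ℕ) :
    chainFun n l (j + 1) =
      Function.update (chainFun n l j) j.succPNat (chainLimit n l j.succPNat) := by
  funext i
  rcases eq_or_ne i j.succPNat with rfl | hi
  · simp [chainFun_apply]
  · have hne : (i : ℕ) ≠ j + 1 := fun hij => hi (PNat.eq hij)
    have hle : (i : ℕ) ≤ j + 1 ↔ (i : ℕ) ≤ j := by omega
    simp only [Function.update_of_ne hi, chainFun_apply, hle]

theorem chainFun_eventually_zero (j : ℕ) :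
    ∃ N : ℕ+, ∀ i : ℕ+, N ≤ i → chainFun n l j i = 0 := by
  obtain ⟨N, hN⟩ := l.eventually_zero'
  refine ⟨max N j.succPNat, fun i hi => ?_⟩
  have hji : j < (i : ℕ) := (le_max_right N j.succPNat).trans hi
  rw [chainFun_apply, if_neg hji.not_ge, hN i ((le_max_left _ _).trans hi)]

variable {n l}

theorem toFun_lt_chainLimit (h : l.size + l.toFun 1 ≤ n) (i : ℕ+) :
    l.toFun i < chainLimit n l i := by
  induction i using PNat.recOn with
  | one =>
    rw [chainLimit_one]
    omega
  | succ i =>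
    rw [chainLimit_add_one]
    exact Nat.lt_succ_of_le (l.antitone' (PNat.lt_add_right i 1).le)

theorem chainLimit_antitone (h : l.size + l.toFun 1 ≤ n) : Antitone (chainLimit n l) := by
  refine antitone_of_succ_le fun i _ => ?_
  rw [Order.succ_eq_add_one, chainLimit_add_one]
  exact toFun_lt_chainLimit h i

theorem chainFun_antitone (h : l.size + l.toFun 1 ≤ n) (j : ℕ) : Antitone (chainFun n l j) := by
  intro i k hik
  have hik' : (i : ℕ) ≤ k := hik
  rw [chainFun_apply, chainFun_apply]
  split_ifs with hk hi hi
  · exact chainLimit_antitone h hik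
  · omega
  · exact (l.antitone' hik).trans (toFun_lt_chainLimit h i).le
  · exact l.antitone' hik

theorem chainFun_strictMono (h : l.size + l.toFun 1 ≤ n) : StrictMono (chainFun n l) := by
  refine strictMono_nat_of_lt_succ fun j => ?_
  rw [chainFun_succ, lt_update_self_iff, chainFun_succPNat]
  exact toFun_lt_chainLimit h _

/-- The partition `λ^{(j)}`. -/
noncomputable def chainPartition (h : l.size + l.toFun 1 ≤ n) (j : ℕ) : NPartition where
  toFun := chainFun n l j
  antitone' _ _ hik := chainFun_antitone h j hik
  eventually_zero' := chainFun_eventually_zero n l j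

theorem chainPartition_zero (h : l.size + l.toFun 1 ≤ n) : chainPartition h 0 = l :=
  NPartition.toFun_injective (chainFun_zero n l)

theorem chainPartition_toFun_succ (h : l.size + l.toFun 1 ≤ n) (j : ℕ) :
    (chainPartition h (j + 1)).toFun =
      Function.update (chainPartition h j).toFun j.succPNat (chainLimit n l j.succPNat) :=
  chainFun_succ n l j

theorem size_chainPartition_add_chainLimit (h : l.size + l.toFun 1 ≤ n) (j : ℕ) :
    (chainPartition h j).size + chainLimit n l j.succPNat = n + (j + 1) := by
  induction j with
  | zero =>
    have hrow : chainLimit n l (Nat.succPNat 0) = n - l.size + 1 := chainLimit_one n l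
    rw [chainPartition_zero, hrow]
    omega
  | succ j ih =>
    have hrow : chainLimit n l (j + 1).succPNat = l.toFun j.succPNat + 1 :=
      chainLimit_add_one n l j.succPNat
    have hsize : (chainPartition h (j + 1)).size + l.toFun j.succPNat =
        (chainPartition h j).size + chainLimit n l j.succPNat :=
      chainFun_succPNat n l j ▸
        NPartition.size_add_of_toFun_eq_update (chainPartition_toFun_succ h j)
    omega

theorem chainPartition_succ_nuEquiv (h : l.size + l.toFun 1 ≤ n) (j : ℕ) :
    nuEquiv n (chainPartition h (j + 1)) (chainPartition h j) := by
  refine nuEquiv_of_toFun_eq_update (chainPartition_toFun_succ h j) ?_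
  have hsize : ((chainPartition h j).size : ℂ) + chainLimit n l j.succPNat = n + (j + 1) := by
    exact_mod_cast size_chainPartition_add_chainLimit h j
  rw [muSeq_zero, Nat.succPNat_coe, Nat.cast_succ]
  linear_combination hsize

theorem chainPartition_nuEquiv (h : l.size + l.toFun 1 ≤ n) (j : ℕ) :
    nuEquiv n (chainPartition h j) l := by
  induction j with
  | zero =>
    rw [chainPartition_zero]
    exact nuEquiv.refl n l
  | succ j ih => exact (chainPartition_succ_nuEquiv h j).trans ih

end chain

/-- Structure of a nontrivial `∼n`-equivalence class: if `|λ| + λ_1 ≤ n` then each `λ^{(j)}` is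
a partition, `λ^{(0)} ⊊ λ^{(1)} ⊊ λ^{(2)} ⊊ ⋯`, and `λ^{(j)} ∼n λ` for every `j ≥ 0`. -/
theorem chain_of_nontrivial_class (n : ℕ) (l : NPartition)
    (h : l.size + l.toFun 1 ≤ n) :
    ∃ Λ : ℕ → NPartition,
      (∀ j : ℕ, (Λ j).toFun = chainFun n l j) ∧
      (∀ j : ℕ, (∀ i : ℕ+, (Λ j).toFun i ≤ (Λ (j + 1)).toFun i) ∧
        (∃ i : ℕ+, (Λ j).toFun i < (Λ (j + 1)).toFun i)) ∧
      (∀ j : ℕ, nuEquiv (n : ℂ) (Λ j) l) := by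
  refine ⟨chainPartition h, fun j => rfl, fun j => ?_, chainPartition_nuEquiv h⟩
  exact Pi.lt_def.1 (chainFun_strictMono h j.lt_succ_self)
end
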